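/- Let S be a type, X and Y nonempty types, T : S → X → Y → S, s₁ ∈ S, and Bad ⊆ S. If there exists a (history-dependent) system strategy f, mapping nonempty finite sequences of elements of X to elements of Y, that is winning from s₁ (i.e., for every infinite sequence x₁, x₂, … over X the play s^1 = s₁, s^{n+1} = T(s^n, x_n, f(x₁,…,x_n)) never visits Bad), then there exists a memoryless policy π : S → X → Y that is winning from s₁ (i.e., for every infinite sequence x₁, x₂, … over X the play s^1 = s₁, s^{n+1} = T(s^n, x_n, π(s^n, x_n)) never visits Bad). -/

import Mathlib

/-- The play induced from initial state `s₁` by a history-dependent system strategy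
`f` (mapping nonempty finite sequences of environment actions to system actions) and
an infinite sequence `x` of environment actions. -/
def stratPlay {S X Y : Type*} (T : S → X → Y → S) (s₁ : S)
    (f : {l : List X // l ≠ []} → Y) (x : ℕ → X) : ℕ → S
  | 0 => s₁
  | n + 1 =>
      T (stratPlay T s₁ f x n) (x n)
        (f ⟨List.ofFn fun i : Fin (n + 1) => x i, by simp⟩)

/-- The play induced from initial state `s₁` by a memoryless policy `π : S → X → Y`
and an infinite sequence `x` of environment actions. -/
def memPlay {S X Y : Type*} (T : S → X → Y → S) (π : S → X → Y) (s₁ : S)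
    (x : ℕ → X) : ℕ → S
  | 0 => s₁
  | n + 1 => T (memPlay T π s₁ x n) (x n) (π (memPlay T π s₁ x n) (x n))

/-!
The states reached in plays consistent with a winning strategy `f` form a set that avoids `Bad` and
in which the system can keep the game: at such a state, the answer that `f` gives to an action `a`
after any one history leading there makes the next state stay in the set. Which history is chosen
does not matter, so one choice for each state and action gives a winning policy.
-/

section

variable {S X Y : Type*} {T : S → X → Y → S} {W : Set S} {s₁ : S}

/-- A set `W` of states is controlled invariant when the system can answer every environment action
at a state of `W` so that the next state is again in `W`. Such a set that contains the initial state
and avoids `Bad` is a winning certificate for the safety game. -/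
def IsControlledInvariant (T : S → X → Y → S) (W : Set S) : Prop :=
  ∀ s ∈ W, ∀ a, ∃ y, T s a y ∈ W

theorem IsControlledInvariant.exists_policy [Nonempty Y] (hW : IsControlledInvariant T W) :
    ∃ π : S → X → Y, ∀ s ∈ W, ∀ a, T s a (π s a) ∈ W := by
  choose! π hπ using hW
  exact ⟨π, hπ⟩

theorem memPlay_mem {π : S → X → Y} (hπ : ∀ s ∈ W, ∀ a, T s a (π s a) ∈ W) (hs₁ : s₁ ∈ W)
    (x : ℕ → X) (n : ℕ) : memPlay T π s₁ x n ∈ W := by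
  induction n with
  | zero => exact hs₁
  | succ n ih => exact hπ _ ih (x n)

theorem stratPlay_congr (f : {l : List X // l ≠ []} → Y) {x z : ℕ → X} {n : ℕ}
    (h : ∀ i < n, x i = z i) : stratPlay T s₁ f x n = stratPlay T s₁ f z n := by
  induction n with
  | zero => rfl
  | succ n ih =>
    have same_state : stratPlay T s₁ f x n = stratPlay T s₁ f z n :=
      ih fun i hi => h i (hi.trans n.lt_succ_self)
    have same_history : (fun i : Fin (n + 1) => x i) = fun i : Fin (n + 1) => z i :=
      funext fun i => h i i.isLt
    simp only [stratPlay, same_state, same_history, h n n.lt_succ_self]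

theorem stratPlay_update_self (f : {l : List X // l ≠ []} → Y) (x : ℕ → X) (n : ℕ) (a : X) :
    stratPlay T s₁ f (Function.update x n a) n = stratPlay T s₁ f x n :=
  stratPlay_congr f fun _ hi => Function.update_of_ne hi.ne a x

/-- The set of states visited by the plays from `s₁` that are consistent with the strategy `f`, over
all environment sequences. -/
def stratReachable (T : S → X → Y → S) (s₁ : S) (f : {l : List X // l ≠ []} → Y) : Set S :=
  {s | ∃ x n, stratPlay T s₁ f x n = s}

theorem isControlledInvariant_stratReachable (f : {l : List X // l ≠ []} → Y) :
    IsControlledInvariant T (stratReachable T s₁ f) := by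
  rintro _ ⟨x, n, rfl⟩ a
  let z := Function.update x n a
  refine ⟨f ⟨List.ofFn fun i : Fin (n + 1) => z i, by simp⟩, z, n + 1, ?_⟩
  have same_state : stratPlay T s₁ f z n = stratPlay T s₁ f x n := stratPlay_update_self f x n a
  have last_action : z n = a := Function.update_self n a x
  rw [stratPlay, same_state, last_action]

end

/-- Memoryless determinacy of safety games: if some history-dependent system strategy
is winning from `s₁` (its plays never visit `Bad`), then some memoryless policy
`π : S → X → Y` is winning from `s₁`. -/
theorem safety_game_memoryless_determinacy {S X Y : Type*} [Nonempty X] [Nonempty Y]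
    (T : S → X → Y → S) (s₁ : S) (Bad : Set S)
    (h : ∃ f : {l : List X // l ≠ []} → Y, ∀ x : ℕ → X, ∀ n : ℕ,
        stratPlay T s₁ f x n ∉ Bad) :
    ∃ π : S → X → Y, ∀ x : ℕ → X, ∀ n : ℕ, memPlay T π s₁ x n ∉ Bad := by
  obtain ⟨f, hf⟩ := h
  obtain ⟨π, hπ⟩ := (isControlledInvariant_stratReachable (T := T) (s₁ := s₁) f).exists_policy
  refine ⟨π, fun x n => ?_⟩
  have initial_mem : s₁ ∈ stratReachable T s₁ f := ⟨x, 0, rfl⟩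
  obtain ⟨z, m, hzm⟩ := memPlay_mem hπ initial_mem x n
  exact hzm ▸ hf z m
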